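/- Let λ be a nonzero l-regular partition which is edge l-connected and such that l divides e_l(λ). Let λ̃ be the partition obtained by removing the first column of the Young diagram of λ (so λ̃_i = λ_i − 1 for 1 ≤ i ≤ ℓ(λ)). Then λ̃ is l-regular and ℓ(Mull(λ)) = ℓ(Mull(λ̃)). -/

import Mathlib

noncomputable section

/-- `p : ℕ → ℕ` represents the partition `λ` with `p i = λ_{i+1}` (0-indexed parts):
a weakly decreasing, eventually zero sequence. -/
def IsPartition (p : ℕ → ℕ) : Prop :=
  (∀ i j, i ≤ j → p j ≤ p i) ∧ ∃ N, ∀ i, N ≤ i → p i = 0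

/-- `ℓ(λ)`, the number of nonzero parts. -/
def plen (p : ℕ → ℕ) : ℕ := sInf {N | p N = 0}

/-- the degree (number of boxes) of the partition. -/
def pdeg (p : ℕ → ℕ) : ℕ := ∑ i ∈ Finset.range (plen p), p i

/-- `λ` is `l`-regular: no `l` consecutive parts are equal and nonzero. -/
def IsLRegular (l : ℕ) (p : ℕ → ℕ) : Prop :=
  ∀ i, p i ≠ 0 → p (i + l - 1) ≠ p i

/-- `λ` is `l`-restricted: `λ_i - λ_{i+1} < l` for all `i`. -/
def IsLRestricted (l : ℕ) (p : ℕ → ℕ) : Prop :=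
  ∀ i, p i - p (i + 1) < l

/-- the transpose (conjugate) partition. -/
def conjP (p : ℕ → ℕ) : ℕ → ℕ :=
  fun j => ((Finset.range (plen p)).filter fun i => j < p i).card

/-- the minimal `h ≥ 1` with `λ_1 - λ_{h+1} + h ≥ l`: when `e(λ) > l`, the first
`l`-segment of the `l`-edge lies in rows `1, …, h`. -/
def firstSeg (l : ℕ) (p : ℕ → ℕ) : ℕ := sInf {h | 1 ≤ h ∧ l ≤ p 0 - p h + h}

/-- removal of the `l`-edge (with fuel): if `e(λ) ≤ l` the whole edge is removed,
otherwise the first `l`-segment is removed from rows `1, …, h` (`h = firstSeg`) and one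
recurses on `(λ_{h+1}, λ_{h+2}, …)`. -/
def removeLEdgeAux (l : ℕ) : ℕ → (ℕ → ℕ) → ℕ → ℕ
  | 0, _ => fun _ => 0
  | n + 1, p =>
    if p 0 = 0 then fun _ => 0
    else if p 0 + plen p - 1 ≤ l then fun i => p (i + 1) - 1
    else fun i =>
      if i + 1 < firstSeg l p then p (i + 1) - 1
      else if i + 1 = firstSeg l p then p 0 + firstSeg l p - 1 - l
      else removeLEdgeAux l n (fun j => p (j + firstSeg l p)) (i - firstSeg l p)

/-- the partition obtained by removing the `l`-edge of `λ`. -/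
def removeLEdge (l : ℕ) (p : ℕ → ℕ) : ℕ → ℕ := removeLEdgeAux l (plen p) p

/-- `e_l(λ)`, the number of nodes of the `l`-edge. -/
def elen (l : ℕ) (p : ℕ → ℕ) : ℕ := pdeg p - pdeg (removeLEdge l p)

/-- the length of `Mull(λ)` prescribed by the defining recursion of the Mullineux map. -/
def mullLen (l : ℕ) (p : ℕ → ℕ) : ℕ :=
  if l ∣ elen l p then elen l p - plen p else elen l p - plen p + 1

/-- the Mullineux map (with fuel): `Mull(0) = 0` and, for `λ ≠ 0` `l`-regular with `ν`
obtained from `λ` by removing the `l`-edge, `Mull(λ)` is the unique `l`-regular partition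
whose `l`-edge removal leaves `Mull(ν)` and whose length is `e_l(λ) - ℓ(λ)` if
`l ∣ e_l(λ)` and `e_l(λ) - ℓ(λ) + 1` otherwise. -/
def mullAux (l : ℕ) : ℕ → (ℕ → ℕ) → ℕ → ℕ
  | 0, _ => fun _ => 0
  | n + 1, p =>
    if p 0 = 0 then fun _ => 0
    else
      Classical.epsilon fun μ : ℕ → ℕ =>
        IsPartition μ ∧ IsLRegular l μ ∧
          removeLEdge l μ = mullAux l n (removeLEdge l p) ∧ plen μ = mullLen l p

/-- the Mullineux map. -/
def mull (l : ℕ) (p : ℕ → ℕ) : ℕ → ℕ := mullAux l (pdeg p) p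

/-- the list of Mullineux components (with fuel). -/
def mullCompsAux (l : ℕ) : ℕ → (ℕ → ℕ) → List (ℕ → ℕ)
  | 0, _ => []
  | n + 1, p =>
    if p 0 = 0 then []
    else if elen l p ≤ l then [p]
    else (fun i => if i < firstSeg l p then p i else 0) ::
      mullCompsAux l n (fun j => p (j + firstSeg l p))

/-- the Mullineux components of `λ`. -/
def mullComps (l : ℕ) (p : ℕ → ℕ) : List (ℕ → ℕ) := mullCompsAux l (plen p) p

/-- edge `l`-connectedness (with fuel): consecutive Mullineux components `α, ρ` satisfy
`α_1 - ρ_1 + ℓ(α) = l`. -/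
def edgeConnAux (l : ℕ) : ℕ → (ℕ → ℕ) → Prop
  | 0, _ => True
  | n + 1, p =>
    if elen l p ≤ l then True
    else p 0 + firstSeg l p = l + p (firstSeg l p) ∧
      edgeConnAux l n fun j => p (j + firstSeg l p)

/-- `λ` is edge `l`-connected. -/
def EdgeLConnected (l : ℕ) (p : ℕ → ℕ) : Prop := edgeConnAux l (plen p) p

/-- the node `(i+1, λ_{i+1})` (in row `i+1`, 1-indexed) is a removable node. -/
def Removable (p : ℕ → ℕ) (i : ℕ) : Prop := p (i + 1) < p i

/-- removal of the removable node in row `i+1`. -/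
def removeNode (p : ℕ → ℕ) (i : ℕ) : ℕ → ℕ := fun k => if k = i then p i - 1 else p k

/-- there is an addable node `(i+1, λ_{i+1} + 1)` in row `i+1` (1-indexed). -/
def Addable (p : ℕ → ℕ) (i : ℕ) : Prop := i ≤ plen p ∧ (i = 0 ∨ p i < p (i - 1))

/-- the removable node in row `i+1` is suitable: its residue (mod `l`) differs from the
residue of every lower addable node. -/
def Suitable (l : ℕ) (p : ℕ → ℕ) (i : ℕ) : Prop :=
  Removable p i ∧ ∀ j, i < j → Addable p j →
    ¬ ((p j : ℤ) - (j : ℤ) ≡ (p i : ℤ) - (i : ℤ) - 1 [ZMOD (l : ℤ)])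

/-- the removable node in row `i+1` is co-suitable: its transpose node is a suitable
node of the transpose partition. -/
def CoSuitable (l : ℕ) (p : ℕ → ℕ) (i : ℕ) : Prop :=
  Removable p i ∧ Suitable l (conjP p) (p i - 1)

/-- `Φ_m`: partitions with at most `m` parts and `λ_1 - λ_m ≤ l - m`. -/
def Phi (l m : ℕ) : Set (ℕ → ℕ) :=
  {p | IsPartition p ∧ plen p ≤ m ∧ p 0 - p (m - 1) ≤ l - m}

/-- `λ` is `m`-distinguished: `λ = λ⁰ + lλ̄` with
`λ⁰ = ((l-m)^k, a_1, …, a_m)`, `l - m > a_1 ≥ … ≥ a_m ≥ 0`, and `λ̄` a partition with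
`λ̄_1 ≤ m - 1`. -/
def IsDistinguished (l m : ℕ) (p : ℕ → ℕ) : Prop :=
  ∃ (k : ℕ) (a : ℕ → ℕ) (pb : ℕ → ℕ),
    IsPartition pb ∧ pb 0 < m ∧
    (∀ i j, i ≤ j → a j ≤ a i) ∧ a 0 < l - m ∧ (∀ i, m ≤ i → a i = 0) ∧
    ∀ i, p i = (if i < k then l - m else a (i - k)) + l * pb i

/-- `q` is obtained from `p` by removing a skew `l`-hook (spanning rows `a+1, …, b+1`,
1-indexed). -/
def IsHookRemoval (l : ℕ) (p q : ℕ → ℕ) : Prop :=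
  IsPartition q ∧ ∃ a b : ℕ, a ≤ b ∧
    (∀ i, i < a → q i = p i) ∧
    (∀ i, a ≤ i → i < b → q i + 1 = p (i + 1)) ∧
    q b + l = p a + (b - a) ∧
    ∀ i, b < i → q i = p i

/-- `q` is the `l`-core of `p`: obtained by repeatedly removing skew `l`-hooks until
none remain. -/
def IsCoreOf (l : ℕ) (p q : ℕ → ℕ) : Prop :=
  Relation.ReflTransGen (fun x y => IsHookRemoval l x y) p q ∧ ∀ r, ¬ IsHookRemoval l q r

/-- the `l`-core of `p`. -/
def lCore (l : ℕ) (p : ℕ → ℕ) : ℕ → ℕ := Classical.epsilon (IsCoreOf l p)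

/-!
An `l`-segment of `λ` occupying `h` rows contributes `l - h` to the length of `Mull(λ)` prescribed
by its recursion (`mullLen`). If `l ∣ e_l(λ)`, all segments have `l` nodes, and then the removal of
the first column does not change the number of rows of any of them.

That the Mullineux map attains the prescribed length amounts to the existence of an `l`-regular
partition with a given `l`-edge removal `μ` and a given length between `ℓ(μ)` and `ℓ(μ) + l`. It is
built from `μ` by adding segments from the bottom up. The prescribed length lies in this range
because the segments of `λ` interlace with those of the partition left by removing its `l`-edge.
-/

/-! ### Partitions as sequences -/

section Partition

variable {p q : ℕ → ℕ}

lemma IsPartition.antitone (hp : IsPartition p) : Antitone p := fun _ _ h => hp.1 _ _ h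

lemma isPartition_zero : IsPartition 0 := ⟨fun _ _ _ => le_rfl, 0, fun _ _ => rfl⟩

lemma IsPartition.of_le (hp : IsPartition p) (hq : Antitone q) (hle : ∀ i, q i ≤ p i) :
    IsPartition q := by
  obtain ⟨N, hN⟩ := hp.2
  exact ⟨fun _ _ h => hq h, N, fun i hi => Nat.le_zero.1 (hN i hi ▸ hle i)⟩

lemma IsPartition.eq_zero (hp : IsPartition p) (h0 : p 0 = 0) : p = 0 :=
  funext fun i => Nat.le_zero.1 (h0 ▸ hp.antitone i.zero_le)

lemma IsPartition.plen_le_iff (hp : IsPartition p) {i : ℕ} : plen p ≤ i ↔ p i = 0 := by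
  obtain ⟨N, hN⟩ := hp.2
  have hmem : p (plen p) = 0 := Nat.sInf_mem (s := {N | p N = 0}) ⟨N, hN N le_rfl⟩
  exact ⟨fun h => Nat.le_zero.1 (hmem ▸ hp.antitone h), fun h => Nat.sInf_le h⟩

lemma IsPartition.lt_plen_iff (hp : IsPartition p) {i : ℕ} : i < plen p ↔ p i ≠ 0 := by
  rw [← not_le, hp.plen_le_iff]

lemma IsPartition.plen_eq_iff (hp : IsPartition p) {n : ℕ} :
    plen p = n ↔ ∀ i, p i = 0 ↔ n ≤ i := by
  refine ⟨fun h i => by rw [← h, hp.plen_le_iff], fun h => le_antisymm ?_ ?_⟩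
  · rw [hp.plen_le_iff, h]
  · rw [← h, ← hp.plen_le_iff]

lemma plen_zero : plen 0 = 0 := Nat.le_zero.1 (Nat.sInf_le rfl)

lemma IsPartition.plen_mono (hp : IsPartition p) (hq : IsPartition q) (hle : ∀ i, p i ≤ q i) :
    plen p ≤ plen q :=
  hp.plen_le_iff.2 (Nat.le_zero.1 (hq.plen_le_iff.1 le_rfl ▸ hle _))

/-- The partition `(λ_{k+1}, λ_{k+2}, …)`, that is `λ` without its first `k` rows. -/
abbrev dropRows (k : ℕ) (p : ℕ → ℕ) : ℕ → ℕ := fun j => p (j + k)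

lemma dropRows_dropRows (a b : ℕ) (p : ℕ → ℕ) :
    dropRows a (dropRows b p) = dropRows (a + b) p :=
  funext fun j => congrArg p (add_assoc j a b)

lemma isPartition_dropRows (hp : IsPartition p) (k : ℕ) : IsPartition (dropRows k p) :=
  hp.of_le (fun _ _ h => hp.antitone (by lia)) fun _ => hp.antitone (by lia)

lemma IsPartition.plen_dropRows (hp : IsPartition p) (k : ℕ) :
    plen (dropRows k p) = plen p - k := by
  rw [(isPartition_dropRows hp k).plen_eq_iff]
  intro i
  rw [← hp.plen_le_iff]
  lia

lemma isLRegular_dropRows {l : ℕ} (hr : IsLRegular l p) (hl : 0 < l) (k : ℕ) :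
    IsLRegular l (dropRows k p) := by
  intro i hi
  have := hr (i + k) hi
  rwa [show i + k + l - 1 = i + l - 1 + k by lia] at this

lemma IsPartition.pdeg_eq_sum_range (hp : IsPartition p) {n : ℕ} (hn : plen p ≤ n) :
    pdeg p = ∑ i ∈ Finset.range n, p i := by
  refine Finset.sum_subset (Finset.range_mono hn) fun i _ hi => ?_
  rwa [Finset.mem_range, not_lt, hp.plen_le_iff] at hi

lemma IsPartition.pdeg_eq_sum_range_add (hp : IsPartition p) (k : ℕ) :
    pdeg p = ∑ i ∈ Finset.range k, p i + pdeg (dropRows k p) := by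
  rw [hp.pdeg_eq_sum_range (Nat.le_add_left _ k), Finset.sum_range_add,
    (isPartition_dropRows hp k).pdeg_eq_sum_range (n := plen p) (by rw [hp.plen_dropRows]; lia)]
  simp only [dropRows, add_comm]

lemma sum_range_succ_eq_sum_pred_add {m : ℕ} (hpos : ∀ i < m, p (i + 1) ≠ 0) :
    ∑ i ∈ Finset.range (m + 1), p i = ∑ i ∈ Finset.range m, (p (i + 1) - 1) + (p 0 + m) := by
  have hsum : ∑ i ∈ Finset.range m, p (i + 1) = ∑ i ∈ Finset.range m, (p (i + 1) - 1 + 1) :=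
    Finset.sum_congr rfl fun i hi =>
      (Nat.succ_pred_eq_of_ne_zero (hpos i (Finset.mem_range.1 hi))).symm
  rw [Finset.sum_range_succ', hsum, Finset.sum_add_distrib, Finset.sum_const, Finset.card_range,
    smul_eq_mul, mul_one]
  lia

end Partition

/-! ### The first segment -/

section FirstSegment

variable {l : ℕ} {p : ℕ → ℕ}

lemma firstSeg_mem (l : ℕ) (p : ℕ → ℕ) :
    1 ≤ firstSeg l p ∧ l ≤ p 0 - p (firstSeg l p) + firstSeg l p :=
  Nat.sInf_mem (s := {h | 1 ≤ h ∧ l ≤ p 0 - p h + h}) ⟨l + 1, by lia, by lia⟩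

lemma firstSeg_pos (l : ℕ) (p : ℕ → ℕ) : 0 < firstSeg l p := (firstSeg_mem l p).1

lemma firstSeg_le {k : ℕ} (hk : 0 < k) (h : l ≤ p 0 - p k + k) : firstSeg l p ≤ k :=
  Nat.sInf_le ⟨hk, h⟩

lemma sub_add_lt_of_lt_firstSeg {k : ℕ} (hk : 0 < k) (h : k < firstSeg l p) :
    p 0 - p k + k < l :=
  not_le.1 fun hle => h.not_ge (firstSeg_le hk hle)

lemma firstSeg_le_self (hl : 0 < l) (p : ℕ → ℕ) : firstSeg l p ≤ l :=
  firstSeg_le hl (Nat.le_add_left _ _)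

lemma firstSeg_eq {k : ℕ} (hk : 0 < k) (h : l ≤ p 0 - p k + k)
    (hmin : ∀ j, 0 < j → j < k → p 0 - p j + j < l) : firstSeg l p = k := by
  refine (firstSeg_le hk h).antisymm (not_lt.1 fun hlt => ?_)
  exact (hmin _ (firstSeg_pos l p) hlt).not_ge (firstSeg_mem l p).2

lemma IsPartition.add_le_add_firstSeg (hp : IsPartition p) (l : ℕ) :
    p (firstSeg l p) + l ≤ p 0 + firstSeg l p := by
  have := (firstSeg_mem l p).2
  have := hp.antitone (firstSeg l p).zero_le
  lia

lemma IsPartition.firstSeg_le_plen (hp : IsPartition p) (h : l < p 0 + plen p) :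
    firstSeg l p ≤ plen p := by
  have h0 : 0 < plen p := by
    have := hp.plen_le_iff (i := 0)
    lia
  refine firstSeg_le h0 ?_
  rw [hp.plen_le_iff.1 le_rfl]
  lia

lemma IsPartition.plen_le_firstSeg (hp : IsPartition p) (h : p 0 + plen p ≤ l + 1) :
    plen p ≤ firstSeg l p := by
  by_contra! hlt
  have := hp.lt_plen_iff.1 hlt
  have := hp.add_le_add_firstSeg l
  lia

lemma IsPartition.add_firstSeg_eq (hp : IsPartition p) (hl : 0 < l) (h : p 0 + plen p ≤ l) :
    p 0 + firstSeg l p = l := by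
  have hpos : 0 < l - p 0 := by
    have := hp.plen_le_iff (i := 0)
    lia
  have hle : firstSeg l p ≤ l - p 0 := by
    refine firstSeg_le hpos ?_
    rw [hp.plen_le_iff.1 (show plen p ≤ l - p 0 by lia)]
    lia
  have := hp.add_le_add_firstSeg l
  lia

lemma IsPartition.firstSeg_lt_iff (hp : IsPartition p) (hl : 0 < l) :
    firstSeg l p < l ↔ p (l - 1) ≠ p 0 := by
  have hle := hp.antitone (l - 1).zero_le
  constructor
  · intro hlt heq
    have := hp.antitone (show firstSeg l p ≤ l - 1 by lia)
    have := (firstSeg_mem l p).2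
    lia
  · intro hne
    have hl1 : 0 < l - 1 := Nat.pos_of_ne_zero fun h => hne (congrArg p h)
    have : firstSeg l p ≤ l - 1 := firstSeg_le hl1 (by lia)
    lia

/-- The partition formed by the rows of `λ` below its first `l`-segment. -/
abbrev belowFirstSeg (l : ℕ) (p : ℕ → ℕ) : ℕ → ℕ := dropRows (firstSeg l p) p

lemma isPartition_belowFirstSeg (hp : IsPartition p) (l : ℕ) : IsPartition (belowFirstSeg l p) :=
  isPartition_dropRows hp _

lemma IsPartition.plen_belowFirstSeg (hp : IsPartition p) (l : ℕ) :
    plen (belowFirstSeg l p) = plen p - firstSeg l p :=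
  hp.plen_dropRows _

lemma IsPartition.belowFirstSeg_eq_zero (hp : IsPartition p) (h : p 0 + plen p ≤ l + 1) :
    belowFirstSeg l p = 0 := by
  refine (isPartition_belowFirstSeg hp l).eq_zero ?_
  rw [← IsPartition.plen_le_iff (isPartition_belowFirstSeg hp l), hp.plen_belowFirstSeg,
    Nat.sub_eq_zero_of_le (hp.plen_le_firstSeg h)]

@[elab_as_elim]
theorem IsPartition.segment_induction (l : ℕ) {motive : ∀ p, IsPartition p → Prop}
    (zero : motive 0 isPartition_zero)
    (step : ∀ p hp, p 0 ≠ 0 → motive (belowFirstSeg l p) (isPartition_belowFirstSeg hp l) →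
      motive p hp)
    (p : ℕ → ℕ) (hp : IsPartition p) : motive p hp := by
  induction hn : plen p using Nat.strong_induction_on generalizing p with
  | _ n ih =>
    by_cases h0 : p 0 = 0
    · obtain rfl := hp.eq_zero h0
      exact zero
    · refine step p hp h0 (ih _ ?_ _ _ rfl)
      have := hp.lt_plen_iff.2 h0
      have := firstSeg_pos l p
      rw [hp.plen_belowFirstSeg]
      lia

end FirstSegment

/-! ### Removing the `l`-edge -/

section RemoveLEdge

variable {l : ℕ} {p : ℕ → ℕ}

lemma removeLEdgeAux_zero (l n : ℕ) : removeLEdgeAux l n 0 = 0 := by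
  cases n with
  | zero => rfl
  | succ n => exact if_pos rfl

lemma removeLEdge_zero (l : ℕ) : removeLEdge l 0 = 0 := removeLEdgeAux_zero l _

lemma IsPartition.removeLEdgeAux_congr (hp : IsPartition p) {m n : ℕ} (hm : plen p ≤ m)
    (hn : plen p ≤ n) : removeLEdgeAux l m p = removeLEdgeAux l n p := by
  induction m generalizing n p with
  | zero =>
    obtain rfl := hp.eq_zero (hp.plen_le_iff.1 hm)
    simp only [removeLEdgeAux_zero]
  | succ m ih =>
    cases n with
    | zero =>
      obtain rfl := hp.eq_zero (hp.plen_le_iff.1 hn)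
      simp only [removeLEdgeAux_zero]
    | succ n =>
      have hlen := hp.plen_belowFirstSeg l
      have := firstSeg_pos l p
      have htail : removeLEdgeAux l m (belowFirstSeg l p) =
          removeLEdgeAux l n (belowFirstSeg l p) :=
        ih (isPartition_belowFirstSeg hp l) (by lia) (by lia)
      unfold removeLEdgeAux
      rw [htail]

lemma IsPartition.removeLEdge_of_le (hp : IsPartition p) (h0 : p 0 ≠ 0)
    (h : p 0 + plen p ≤ l + 1) (i : ℕ) : removeLEdge l p i = p (i + 1) - 1 := by
  rw [removeLEdge, hp.removeLEdgeAux_congr le_rfl (Nat.le_succ _), removeLEdgeAux, if_neg h0,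
    if_pos (by lia)]

-- If `e(λ) ≤ l`, the truncated subtraction gives `0` in row `h = firstSeg l p`, as it should since
-- row `h + 1` of `λ` is empty. Hence the recursive rule is also valid for the last segment.
lemma IsPartition.removeLEdge_apply (hp : IsPartition p) (i : ℕ) :
    removeLEdge l p i =
      if i + 1 < firstSeg l p then p (i + 1) - 1
      else if i + 1 = firstSeg l p then p 0 + firstSeg l p - 1 - l
      else removeLEdge l (belowFirstSeg l p) (i - firstSeg l p) := by
  have hp' := isPartition_belowFirstSeg hp l
  have hlen := hp.plen_belowFirstSeg l
  by_cases hshort : p 0 + plen p ≤ l + 1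
  · have htail := hp.belowFirstSeg_eq_zero hshort
    have hvanish : firstSeg l p ≤ i + 1 → p (i + 1) = 0 := fun hi =>
      hp.plen_le_iff.1 ((hp.plen_le_firstSeg hshort).trans hi)
    have hend : p 0 + firstSeg l p ≤ l + 1 := by
      have hk : p (l + 1 - p 0) = 0 := hp.plen_le_iff.1 (by lia)
      have : firstSeg l p ≤ l + 1 - p 0 := firstSeg_le (by lia) (by lia)
      lia
    have hedge : removeLEdge l p i = p (i + 1) - 1 := by
      by_cases h0 : p 0 = 0
      · obtain rfl := hp.eq_zero h0
        rw [removeLEdge_zero]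
        rfl
      · exact hp.removeLEdge_of_le h0 hshort i
    rw [hedge, htail, removeLEdge_zero, Pi.zero_apply]
    split_ifs <;> lia
  · have h0 : p 0 ≠ 0 := fun h0 => hshort (by have := hp.plen_le_iff.2 h0; lia)
    rw [removeLEdge, hp.removeLEdgeAux_congr le_rfl (Nat.le_succ _), removeLEdgeAux, if_neg h0,
      if_neg (by lia), hp'.removeLEdgeAux_congr (n := plen _) (by lia) le_rfl]
    rfl

lemma IsPartition.removeLEdge_of_lt (hp : IsPartition p) {i : ℕ} (hi : i + 1 < firstSeg l p) :
    removeLEdge l p i = p (i + 1) - 1 := by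
  rw [hp.removeLEdge_apply, if_pos hi]

lemma IsPartition.removeLEdge_of_eq (hp : IsPartition p) {i : ℕ} (hi : i + 1 = firstSeg l p) :
    removeLEdge l p i = p 0 + i - l := by
  rw [hp.removeLEdge_apply, if_neg hi.not_lt, if_pos hi, ← hi]
  lia

lemma IsPartition.removeLEdge_add_firstSeg (hp : IsPartition p) (i : ℕ) :
    removeLEdge l p (i + firstSeg l p) = removeLEdge l (belowFirstSeg l p) i := by
  rw [hp.removeLEdge_apply, if_neg (by lia), if_neg (by lia), Nat.add_sub_cancel]

lemma IsPartition.dropRows_removeLEdge (hp : IsPartition p) (k : ℕ) :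
    dropRows (k + firstSeg l p) (removeLEdge l p) =
      dropRows k (removeLEdge l (belowFirstSeg l p)) :=
  funext fun j => by
    rw [dropRows, dropRows, ← add_assoc, hp.removeLEdge_add_firstSeg]

lemma firstSeg_cases (l : ℕ) (p : ℕ → ℕ) (i : ℕ) :
    i + 1 < firstSeg l p ∨ i + 1 = firstSeg l p ∨ ∃ j, i = j + firstSeg l p := by
  rcases lt_trichotomy (i + 1) (firstSeg l p) with h | h | h
  · exact .inl h
  · exact .inr (.inl h)
  · exact .inr (.inr ⟨i - firstSeg l p, by lia⟩)

lemma IsPartition.succ_le_removeLEdge_add_one (hp : IsPartition p) (i : ℕ) :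
    p (i + 1) ≤ removeLEdge l p i + 1 := by
  induction p, hp using IsPartition.segment_induction l generalizing i with
  | zero => exact Nat.zero_le _
  | step p hp _ ih =>
    rcases firstSeg_cases l p i with hi | hi | ⟨j, rfl⟩
    · rw [hp.removeLEdge_of_lt hi]
      lia
    · have := hp.add_le_add_firstSeg l
      rw [hp.removeLEdge_of_eq hi, hi]
      lia
    · rw [hp.removeLEdge_add_firstSeg, add_right_comm]
      exact ih j

lemma IsPartition.removeLEdge_le_sub_one (hp : IsPartition p) (hl : 0 < l) (i : ℕ) :
    removeLEdge l p i ≤ p i - 1 := by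
  induction p, hp using IsPartition.segment_induction l generalizing i with
  | zero => rw [removeLEdge_zero]; exact Nat.zero_le _
  | step p hp _ ih =>
    rcases firstSeg_cases l p i with hi | hi | ⟨j, rfl⟩
    · rw [hp.removeLEdge_of_lt hi]
      exact Nat.sub_le_sub_right (hp.antitone i.le_succ) 1
    · rw [hp.removeLEdge_of_eq hi]
      rcases i.eq_zero_or_pos with rfl | hpos
      · lia
      · have := sub_add_lt_of_lt_firstSeg hpos (l := l) (p := p) (by lia)
        lia
    · rw [hp.removeLEdge_add_firstSeg]
      exact ih j

lemma isPartition_removeLEdge (hp : IsPartition p) (hl : 0 < l) :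
    IsPartition (removeLEdge l p) := by
  refine hp.of_le (antitone_nat_of_succ_le fun i => ?_) fun i =>
    (hp.removeLEdge_le_sub_one hl i).trans (Nat.sub_le _ _)
  have := hp.succ_le_removeLEdge_add_one (l := l) i
  have := hp.removeLEdge_le_sub_one hl (i + 1)
  lia

-- The second alternative occurs in the last row `i` of a segment that starts in row `s`.
lemma IsPartition.removeLEdge_eq_or (hp : IsPartition p) (hl : 0 < l) (i : ℕ) :
    removeLEdge l p i = p (i + 1) - 1 ∨
      ∃ s ≤ i, i < s + l ∧ removeLEdge l p i = p s + (i - s) - l := by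
  induction p, hp using IsPartition.segment_induction l generalizing i with
  | zero => rw [removeLEdge_zero]; exact .inl rfl
  | step p hp _ ih =>
    rcases firstSeg_cases l p i with hi | hi | ⟨j, rfl⟩
    · exact .inl (hp.removeLEdge_of_lt hi)
    · have := firstSeg_le_self hl p
      exact .inr ⟨0, i.zero_le, by lia, hp.removeLEdge_of_eq hi⟩
    · rw [hp.removeLEdge_add_firstSeg, add_right_comm]
      refine (ih j).imp_right ?_
      rintro ⟨s, hsj, hjs, heq⟩
      exact ⟨s + firstSeg l p, by lia, by lia, by rw [heq, Nat.add_sub_add_right]⟩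

lemma isLRegular_removeLEdge (hr : IsLRegular l p) (hp : IsPartition p) (hl : 2 ≤ l) :
    IsLRegular l (removeLEdge l p) := by
  have hl0 : 0 < l := Nat.zero_lt_of_lt hl
  intro i hi heq
  -- The interlacing of `λ` with `ν` turns `l` equal rows of `ν` into `l - 1` equal rows of `λ`.
  have hblock : ∀ j, i < j → j < i + l → p j = removeLEdge l p i + 1 := by
    intro j hij hjl
    have := hp.removeLEdge_le_sub_one hl0 j
    have hhigh := hp.succ_le_removeLEdge_add_one (l := l) (j - 1)
    have := (isPartition_removeLEdge hp hl0).antitone (show j ≤ i + l - 1 by lia)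
    have := (isPartition_removeLEdge hp hl0).antitone (show i ≤ j - 1 by lia)
    rw [Nat.sub_add_cancel (by lia)] at hhigh
    lia
  rcases hp.removeLEdge_eq_or hl0 (i + l - 1) with hmid | ⟨s, hs, hsl, hend⟩
  · have hreg := hr (i + 1)
    rw [show i + 1 + l - 1 = i + l by lia] at hreg
    rw [heq, Nat.sub_add_cancel (by lia)] at hmid
    have := hblock (i + 1) (by lia) (by lia)
    lia
  · rcases (show i ≤ s by lia).eq_or_lt with rfl | his
    · have := hblock (i + l - 1) (by lia) (by lia)
      have := hr i
      lia
    · have := hblock s his (by lia)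
      lia

end RemoveLEdge

/-! ### The size of the `l`-edge and the length of the image -/

section MullLen

variable {l : ℕ} {p : ℕ → ℕ}

lemma IsPartition.pdeg_removeLEdge_add_plen_le (hp : IsPartition p) (hl : 0 < l) :
    pdeg (removeLEdge l p) + plen p ≤ pdeg p := by
  have hlen : plen (removeLEdge l p) ≤ plen p :=
    (isPartition_removeLEdge hp hl).plen_mono hp fun i =>
      (hp.removeLEdge_le_sub_one hl i).trans (Nat.sub_le _ _)
  calc pdeg (removeLEdge l p) + plen p
      = ∑ i ∈ Finset.range (plen p), (removeLEdge l p i + 1) := by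
        rw [(isPartition_removeLEdge hp hl).pdeg_eq_sum_range hlen, Finset.sum_add_distrib,
          Finset.sum_const, Finset.card_range, smul_eq_mul, mul_one]
    _ ≤ pdeg p := Finset.sum_le_sum fun i hi => by
        have := hp.lt_plen_iff.1 (Finset.mem_range.1 hi)
        have := hp.removeLEdge_le_sub_one hl i
        lia

lemma elen_zero (l : ℕ) : elen l 0 = 0 := by
  rw [elen, removeLEdge_zero, Nat.sub_self]

lemma IsPartition.plen_le_elen (hp : IsPartition p) (hl : 0 < l) : plen p ≤ elen l p :=
  Nat.le_sub_of_add_le' (hp.pdeg_removeLEdge_add_plen_le hl)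

lemma IsPartition.elen_of_le (hp : IsPartition p) (hl : 0 < l) (h0 : p 0 ≠ 0)
    (h : p 0 + plen p ≤ l) : elen l p = p 0 + plen p - 1 := by
  obtain ⟨m, hm⟩ : ∃ m, plen p = m + 1 :=
    Nat.exists_eq_succ_of_ne_zero (hp.lt_plen_iff.2 h0).ne'
  have hedge := hp.removeLEdge_of_le h0 (h.trans l.le_succ)
  have hν := isPartition_removeLEdge hp hl
  have hlen : plen (removeLEdge l p) ≤ m := by
    rw [hν.plen_le_iff, hedge, hp.plen_le_iff.1 hm.le]
  have hsum : pdeg p = pdeg (removeLEdge l p) + (p 0 + m) := by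
    rw [hp.pdeg_eq_sum_range hm.le, hν.pdeg_eq_sum_range hlen,
      sum_range_succ_eq_sum_pred_add fun i hi => hp.lt_plen_iff.1 (by lia)]
    simp only [hedge]
  rw [elen, hsum, hm]
  lia

lemma IsPartition.elen_of_lt (hp : IsPartition p) (hl : 0 < l) (h : l < p 0 + plen p) :
    elen l p = l + elen l (belowFirstSeg l p) := by
  have hν := isPartition_removeLEdge hp hl
  have hseg := hp.firstSeg_le_plen h
  have hadd := hp.add_le_add_firstSeg l
  obtain ⟨m, hm⟩ : ∃ m, m + 1 = firstSeg l p := ⟨_, Nat.sub_add_cancel (firstSeg_pos l p)⟩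
  have htail : dropRows (firstSeg l p) (removeLEdge l p) = removeLEdge l (belowFirstSeg l p) :=
    funext hp.removeLEdge_add_firstSeg
  have hsum : ∑ i ∈ Finset.range (firstSeg l p), p i =
      ∑ i ∈ Finset.range (firstSeg l p), removeLEdge l p i + l := by
    rw [← hm, sum_range_succ_eq_sum_pred_add fun i hi => hp.lt_plen_iff.1 (by lia),
      Finset.sum_range_succ, hp.removeLEdge_of_eq hm,
      Finset.sum_congr rfl fun i hi =>
        hp.removeLEdge_of_lt (by have := Finset.mem_range.1 hi; lia)]
    have : l ≤ p 0 + m := by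
      have := hp.lt_plen_iff (i := firstSeg l p)
      lia
    lia
  have hle := (isPartition_belowFirstSeg hp l).pdeg_removeLEdge_add_plen_le hl
  rw [elen, elen, hp.pdeg_eq_sum_range_add (firstSeg l p),
    hν.pdeg_eq_sum_range_add (firstSeg l p), htail, hsum]
  lia

lemma mullLen_zero (l : ℕ) : mullLen l 0 = 0 := by
  rw [mullLen, elen_zero, if_pos (dvd_zero l), Nat.zero_sub]

lemma IsPartition.not_dvd_elen (hp : IsPartition p) (hl : 0 < l) (h0 : p 0 ≠ 0)
    (h : p 0 + plen p ≤ l) : ¬ l ∣ elen l p := by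
  have := hp.lt_plen_iff.2 h0
  rw [hp.elen_of_le hl h0 h]
  exact Nat.not_dvd_of_pos_of_lt (by lia) (by lia)

lemma IsPartition.mullLen_of_le (hp : IsPartition p) (hl : 0 < l) (h : p 0 + plen p ≤ l) :
    mullLen l p = p 0 := by
  by_cases h0 : p 0 = 0
  · obtain rfl := hp.eq_zero h0
    exact mullLen_zero l
  · have := hp.lt_plen_iff.2 h0
    rw [mullLen, if_neg (hp.not_dvd_elen hl h0 h), hp.elen_of_le hl h0 h]
    lia

lemma IsPartition.mullLen_add_firstSeg (hp : IsPartition p) (hl : 0 < l) :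
    mullLen l p + firstSeg l p = l + mullLen l (belowFirstSeg l p) := by
  rcases le_or_gt (p 0 + plen p) l with h | h
  · rw [hp.mullLen_of_le hl h, hp.add_firstSeg_eq hl h,
      hp.belowFirstSeg_eq_zero (h.trans l.le_succ), mullLen_zero, add_zero]
  · have hdvd : l ∣ elen l p ↔ l ∣ elen l (belowFirstSeg l p) := by
      rw [hp.elen_of_lt hl h, Nat.dvd_add_right dvd_rfl]
    have := hp.elen_of_lt hl h
    have := (isPartition_belowFirstSeg hp l).plen_le_elen hl
    have := hp.plen_belowFirstSeg l
    have := hp.firstSeg_le_plen h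
    have := firstSeg_le_self hl p
    simp only [mullLen, hdvd]
    split_ifs <;> lia

lemma IsPartition.exists_removeLEdge_add_eq (hp : IsPartition p) (hl : 0 < l) :
    ∃ b, removeLEdge l p b + l = p 0 + b := by
  obtain ⟨m, hm⟩ : ∃ m, m + 1 = firstSeg l p := ⟨_, Nat.sub_add_cancel (firstSeg_pos l p)⟩
  rcases le_or_gt l (p 0 + m) with h | h
  · exact ⟨m, by rw [hp.removeLEdge_of_eq hm]; lia⟩
  · have := hp.add_le_add_firstSeg l
    have hvanish := (hp.removeLEdge_le_sub_one hl (firstSeg l p))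
    exact ⟨firstSeg l p, by lia⟩

lemma IsPartition.le_removeLEdge_zero_add (hp : IsPartition p) (hl : 0 < l) :
    p 0 ≤ removeLEdge l p 0 + l := by
  obtain ⟨b, hb⟩ := hp.exists_removeLEdge_add_eq hl
  have := (isPartition_removeLEdge hp hl).antitone b.zero_le
  lia

lemma IsPartition.firstSeg_le_add_firstSeg_dropRows (hp : IsPartition p) (hl : 0 < l) (k : ℕ) :
    firstSeg l p ≤ k + firstSeg l (dropRows k (removeLEdge l p)) := by
  by_contra! hlt
  have hν := isPartition_removeLEdge hp hl
  have hadd := (isPartition_dropRows hν k).add_le_add_firstSeg l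
  have hend : removeLEdge l p (firstSeg l p - 1) = p 0 + (firstSeg l p - 1) - l :=
    hp.removeLEdge_of_eq (Nat.sub_add_cancel (firstSeg_pos l p))
  have := hν.antitone (Nat.le_sub_one_of_lt hlt)
  have := hp.removeLEdge_le_sub_one hl k
  have := hp.antitone k.zero_le
  have := firstSeg_le_self hl p
  rw [dropRows, dropRows, zero_add, add_comm _ k] at hadd
  lia

-- The hypothesis says that row `k + 1` of `ν` is not below the first segment of `λ`. The segment of
-- `ν` starting in that row then ends between the ends of the first two segments of `λ`.
lemma IsPartition.exists_add_firstSeg_eq (hp : IsPartition p) (hl : 0 < l) {k : ℕ}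
    (hk : p 0 + k ≤ removeLEdge l p k + l) :
    ∃ k', k + firstSeg l (dropRows k (removeLEdge l p)) = k' + firstSeg l p ∧
      belowFirstSeg l p 0 + k' ≤ removeLEdge l (belowFirstSeg l p) k' + l := by
  have hν := (isPartition_removeLEdge hp hl).antitone
  have hq := isPartition_belowFirstSeg hp l
  have hadd := hp.add_le_add_firstSeg l
  have hmin := fun j hj => firstSeg_le (l := l) (p := dropRows k (removeLEdge l p)) (k := j) hj
  simp only [dropRows, zero_add] at hmin ⊢
  obtain ⟨k', hk'⟩ : ∃ k', k + firstSeg l (dropRows k (removeLEdge l p)) = k' + firstSeg l p :=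
    Nat.exists_eq_add_of_le' (hp.firstSeg_le_add_firstSeg_dropRows hl k)
  refine ⟨k', hk', ?_⟩
  obtain ⟨b, hb⟩ := hq.exists_removeLEdge_add_eq hl
  have hrow := hp.removeLEdge_add_firstSeg (l := l) b
  simp only [belowFirstSeg, dropRows, zero_add] at hb hrow
  have hkb : k < b + firstSeg l p := by
    by_contra! hle
    have := hν hle
    lia
  have hend := hmin (b + firstSeg l p - k) (by lia)
  rw [Nat.sub_add_cancel hkb.le] at hend
  have := (isPartition_removeLEdge hq hl).antitone (show k' ≤ b by lia)
  lia

lemma IsPartition.mullLen_dropRows_removeLEdge (hp : IsPartition p) (hl : 0 < l) {k : ℕ}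
    (hk : p 0 + k ≤ removeLEdge l p k + l) :
    mullLen l (dropRows k (removeLEdge l p)) ≤ mullLen l p + k ∧
      mullLen l p + k ≤ mullLen l (dropRows k (removeLEdge l p)) + l := by
  induction p, hp using IsPartition.segment_induction l generalizing k with
  | zero =>
    rw [removeLEdge_zero] at hk ⊢
    rw [show dropRows k 0 = 0 from rfl, mullLen_zero]
    simpa using hk
  | step p hp _ ih =>
    obtain ⟨k', hkk', hk'⟩ := hp.exists_add_firstSeg_eq hl hk
    have htail : belowFirstSeg l (dropRows k (removeLEdge l p)) =
        dropRows k' (removeLEdge l (belowFirstSeg l p)) := by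
      rw [belowFirstSeg, dropRows_dropRows, add_comm _ k, hkk', hp.dropRows_removeLEdge]
    have hν := (isPartition_dropRows (isPartition_removeLEdge hp hl) k).mullLen_add_firstSeg hl
    have := hp.mullLen_add_firstSeg hl
    have := ih hk'
    rw [htail] at hν
    lia

lemma IsPartition.mullLen_removeLEdge (hp : IsPartition p) (hl : 0 < l) :
    mullLen l (removeLEdge l p) ≤ mullLen l p ∧
      mullLen l p ≤ mullLen l (removeLEdge l p) + l :=
  hp.mullLen_dropRows_removeLEdge hl (k := 0) (hp.le_removeLEdge_zero_add hl)

end MullLen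

/-! ### Adding an `l`-edge -/

section AddSegment

variable {l m : ℕ} {ν t : ℕ → ℕ}

/-- The partition whose first `l`-segment occupies rows `1, …, m + 1`, whose remaining rows form
`t`, and for which removing this segment turns the first `m + 1` rows into those of `ν`. It inverts
the removal of one segment whenever `ν_1 + m + 1 ≤ ν_{m+1} + l` and `t_1 ≤ ν_{m+1} + 1`. -/
def addSegment (l m : ℕ) (ν t : ℕ → ℕ) : ℕ → ℕ
  | 0 => ν m + l - m
  | k + 1 => if k < m then ν k + 1 else t (k - m)

lemma addSegment_zero : addSegment l m ν t 0 = ν m + l - m := rfl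

lemma addSegment_succ_of_lt {k : ℕ} (hk : k < m) : addSegment l m ν t (k + 1) = ν k + 1 :=
  if_pos hk

lemma addSegment_add (k : ℕ) : addSegment l m ν t (k + (m + 1)) = t k :=
  (if_neg (by lia)).trans (congrArg t (Nat.add_sub_cancel k m))

lemma addSegment_succ_self : addSegment l m ν t (m + 1) = t 0 := by
  simpa only [zero_add] using addSegment_add (l := l) (ν := ν) (t := t) 0

lemma addSegment_succ_le (hν : Antitone ν) (ht : Antitone t)
    (hseg : ν 0 + (m + 1) ≤ ν m + l) (htop : t 0 ≤ ν m + 1) (i : ℕ) :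
    addSegment l m ν t (i + 1) ≤ addSegment l m ν t i := by
  rcases lt_trichotomy i m with hi | rfl | hi
  · rw [addSegment_succ_of_lt hi]
    cases i with
    | zero => rw [addSegment_zero]; lia
    | succ j =>
      rw [addSegment_succ_of_lt (Nat.lt_of_succ_lt hi)]
      exact Nat.succ_le_succ (hν j.le_succ)
  · rw [addSegment_succ_self]
    cases i with
    | zero => rw [addSegment_zero]; lia
    | succ j =>
      rw [addSegment_succ_of_lt j.lt_succ_self]
      exact htop.trans (Nat.succ_le_succ (hν j.le_succ))
  · obtain ⟨k, rfl⟩ : ∃ k, i = k + (m + 1) := Nat.exists_eq_add_of_le' hi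
    rw [add_right_comm, addSegment_add, addSegment_add]
    exact ht k.le_succ

lemma isPartition_addSegment (hν : Antitone ν) (ht : IsPartition t)
    (hseg : ν 0 + (m + 1) ≤ ν m + l) (htop : t 0 ≤ ν m + 1) :
    IsPartition (addSegment l m ν t) := by
  obtain ⟨N, hN⟩ := ht.2
  have hanti : Antitone (addSegment l m ν t) :=
    antitone_nat_of_succ_le (addSegment_succ_le hν ht.antitone hseg htop)
  refine ⟨fun _ _ h => hanti h, N + (m + 1), fun i hi => Nat.le_zero.1 ((hanti hi).trans ?_)⟩
  rw [addSegment_add, hN N le_rfl]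

lemma firstSeg_addSegment (hν : Antitone ν) (hseg : ν 0 + (m + 1) ≤ ν m + l)
    (htop : t 0 ≤ ν m + 1) : firstSeg l (addSegment l m ν t) = m + 1 := by
  have hzero : addSegment l m ν t 0 = ν m + l - m := addSegment_zero
  refine firstSeg_eq m.succ_pos ?_ fun j hj hjm => ?_
  · rw [hzero, addSegment_succ_self]
    lia
  · obtain ⟨k, rfl⟩ := Nat.exists_eq_add_of_le' hj
    have hk : k < m := Nat.lt_of_succ_lt_succ hjm
    have := hν k.zero_le
    have := hν hk.le
    rw [hzero, addSegment_succ_of_lt hk]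
    lia

lemma belowFirstSeg_addSegment (hν : Antitone ν) (hseg : ν 0 + (m + 1) ≤ ν m + l)
    (htop : t 0 ≤ ν m + 1) : belowFirstSeg l (addSegment l m ν t) = t := by
  rw [belowFirstSeg, firstSeg_addSegment hν hseg htop]
  exact funext addSegment_add

lemma plen_addSegment (hν : Antitone ν) (ht : IsPartition t)
    (hseg : ν 0 + (m + 1) ≤ ν m + l) (htop : t 0 ≤ ν m + 1) :
    plen (addSegment l m ν t) = m + 1 + plen t := by
  have hu := isPartition_addSegment hν ht hseg htop
  have hm : m < plen (addSegment l m ν t) := by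
    rw [hu.lt_plen_iff]
    cases m with
    | zero => rw [addSegment_zero]; lia
    | succ k => rw [addSegment_succ_of_lt k.lt_succ_self]; exact Nat.succ_ne_zero _
  have hlen := hu.plen_belowFirstSeg l
  rw [belowFirstSeg_addSegment hν hseg htop, firstSeg_addSegment hν hseg htop] at hlen
  lia

lemma removeLEdge_addSegment (hν : Antitone ν) (ht : IsPartition t)
    (hseg : ν 0 + (m + 1) ≤ ν m + l) (htop : t 0 ≤ ν m + 1)
    (hrem : removeLEdge l t = dropRows (m + 1) ν) :
    removeLEdge l (addSegment l m ν t) = ν := by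
  have hfirst := firstSeg_addSegment hν hseg htop
  funext i
  rw [(isPartition_addSegment hν ht hseg htop).removeLEdge_apply,
    belowFirstSeg_addSegment hν hseg htop, hfirst, hrem, addSegment_zero]
  split_ifs with hlt heq
  · rw [addSegment_succ_of_lt (Nat.lt_of_succ_lt_succ hlt), Nat.add_sub_cancel]
  · obtain rfl := Nat.succ_injective heq
    lia
  · exact congrArg ν (Nat.sub_add_cancel (by lia))

lemma isLRegular_addSegment (hl : 2 ≤ l) (hν : IsPartition ν) (hνr : IsLRegular l ν)
    (ht : IsPartition t) (htr : IsLRegular l t)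
    (hseg : ν 0 + (m + 1) ≤ ν m + l) (htop : t 0 ≤ ν m + 1)
    (hrem : removeLEdge l t = dropRows (m + 1) ν)
    (hm : m + 1 < plen ν + l) (hlen : m + 1 + plen t ≤ plen ν + l) :
    IsLRegular l (addSegment l m ν t) := by
  have hu := isPartition_addSegment hν.antitone ht hseg htop
  intro i hi heq
  rcases i with _ | i
  · -- Equality of the first `l` rows forces `m + 1 = l` and then `l` equal rows of `ν`.
    have hml : l ≤ m + 1 := by
      rw [← firstSeg_addSegment hν.antitone hseg htop, ← not_lt, hu.firstSeg_lt_iff (by lia)]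
      rw [zero_add] at heq
      exact not_not.2 heq
    have := hν.antitone m.zero_le
    have := hνr 0
    rw [show 0 + l - 1 = m by lia] at this
    have := hν.plen_le_iff (i := 0)
    lia
  · rcases lt_or_ge i m with him | him
    · rw [addSegment_succ_of_lt him, show i + 1 + l - 1 = i + l - 1 + 1 by lia] at heq
      have hlow := hu.succ_le_removeLEdge_add_one (l := l) (i + l - 1)
      rw [removeLEdge_addSegment hν.antitone ht hseg htop hrem] at hlow
      have := hν.antitone (show i ≤ i + l - 1 by lia)
      have := hνr i
      have := hν.plen_le_iff (i := i)
      have hpos := hu.lt_plen_iff (i := i + l - 1 + 1)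
      rw [plen_addSegment hν.antitone ht hseg htop] at hpos
      lia
    · obtain ⟨k, rfl⟩ := Nat.exists_eq_add_of_le' him
      rw [show k + m + 1 + l - 1 = k + l - 1 + (m + 1) by lia, add_assoc k, addSegment_add,
        addSegment_add] at heq
      rw [add_assoc k, addSegment_add] at hi
      exact htr k hi heq

end AddSegment

section AddEdge

variable {l : ℕ} {ν t : ℕ → ℕ}

-- The segments are added from the bottom to the top. The one ending in row `c + 1` starts in the
-- highest row `i + 1` in which the new row is longer than the row of `ν` it covers.
lemma exists_removeLEdge_eq_of_dropRows (hl : 2 ≤ l) (hν : IsPartition ν) (hνr : IsLRegular l ν)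
    {b : ℕ} (ht : IsPartition t) (htr : IsLRegular l t) (hrem : removeLEdge l t = dropRows b ν)
    (htop : ∀ c < b, t 0 ≤ ν c + 1) (hb : b < plen ν + l) (hlen : b + plen t ≤ plen ν + l) :
    ∃ u, IsPartition u ∧ IsLRegular l u ∧ removeLEdge l u = ν ∧ plen u = b + plen t := by
  induction b using Nat.strong_induction_on generalizing t with
  | _ b ih =>
    rcases b with _ | c
    · exact ⟨t, ht, htr, hrem, (zero_add _).symm⟩
    have hex : ∃ i, ν i + c < ν c + l + i := ⟨c, by lia⟩
    obtain ⟨i, hi, hmin⟩ : ∃ i, ν i + c < ν c + l + i ∧ ∀ j < i, ν c + l + j ≤ ν j + c :=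
      ⟨Nat.find hex, Nat.find_spec hex, fun j hj => not_lt.1 (Nat.find_min hex hj)⟩
    obtain ⟨m, rfl⟩ : ∃ m, c = m + i :=
      Nat.exists_eq_add_of_le' (not_lt.1 fun hlt => by have := hmin c hlt; lia)
    have hiν : i ≤ plen ν := not_lt.1 fun hlt => by
      have := hmin _ hlt
      have := hν.plen_le_iff.1 le_rfl
      lia
    have hd := isPartition_dropRows hν i
    have hdlen := hν.plen_dropRows i
    have hdrem : removeLEdge l t = dropRows (m + 1) (dropRows i ν) := by
      rw [hrem, dropRows_dropRows, add_right_comm]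
    have hseg : dropRows i ν 0 + (m + 1) ≤ dropRows i ν m + l := by
      rw [dropRows, zero_add]
      lia
    have hdtop : t 0 ≤ dropRows i ν m + 1 := htop _ (Nat.lt_succ_self _)
    have hfit : ∀ j < i, addSegment l m (dropRows i ν) t 0 ≤ ν j + 1 := fun j hj => by
      have := hmin (i - 1) (by lia)
      have := hν.antitone (show j ≤ i - 1 by lia)
      rw [addSegment_zero, dropRows]
      lia
    have hulen := plen_addSegment hd.antitone ht hseg hdtop
    obtain ⟨v, hv, hvr, hvrem, hvlen⟩ := ih i (by lia)
      (isPartition_addSegment hd.antitone ht hseg hdtop)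
      (isLRegular_addSegment hl hd (isLRegular_dropRows hνr (by lia) i) ht htr hseg hdtop hdrem
        (by lia) (by lia))
      (removeLEdge_addSegment hd.antitone ht hseg hdtop hdrem) hfit (by lia) (by lia)
    exact ⟨v, hv, hvr, hvrem, by lia⟩

lemma isPartition_single : IsPartition (Pi.single 0 1) := by
  refine ⟨fun i j hij => ?_, 1, fun i hi => Pi.single_eq_of_ne (by lia) 1⟩
  simp only [Pi.single_apply]
  split_ifs <;> lia

lemma plen_single : plen (Pi.single 0 1) = 1 := by
  refine isPartition_single.plen_eq_iff.2 fun i => ?_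
  rw [Pi.single_apply]
  split_ifs <;> lia

lemma isLRegular_single {l : ℕ} (hl : 2 ≤ l) : IsLRegular l (Pi.single 0 1) := by
  intro i hi
  rw [Pi.single_eq_of_ne (by lia)]
  exact hi.symm

lemma removeLEdge_single (hl : 0 < l) : removeLEdge l (Pi.single 0 1) = 0 := by
  funext i
  have := isPartition_single.removeLEdge_le_sub_one hl i
  rw [Pi.single_apply] at this
  rw [Pi.zero_apply]
  split_ifs at this <;> lia

lemma exists_removeLEdge_eq (hl : 2 ≤ l) (hν : IsPartition ν) (hνr : IsLRegular l ν) {s : ℕ}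
    (hs : plen ν ≤ s) (hsl : s ≤ plen ν + l) :
    ∃ u, IsPartition u ∧ IsLRegular l u ∧ removeLEdge l u = ν ∧ plen u = s := by
  have hdrop : ∀ b, plen ν ≤ b → dropRows b ν = 0 := fun b hb =>
    funext fun j => hν.plen_le_iff.1 (hb.trans (Nat.le_add_left b j))
  rcases hs.eq_or_lt with rfl | hlt
  · have hzero : IsLRegular l 0 := fun _ h => absurd rfl h
    simpa only [plen_zero, add_zero] using exists_removeLEdge_eq_of_dropRows hl hν hνr
      isPartition_zero hzero (by rw [removeLEdge_zero, hdrop _ le_rfl])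
      (fun _ _ => Nat.zero_le _) (by lia) (by rw [plen_zero]; lia)
  · have hadd : s - 1 + plen (Pi.single 0 1) = s := by rw [plen_single]; lia
    simpa only [hadd] using exists_removeLEdge_eq_of_dropRows hl hν hνr (b := s - 1)
      isPartition_single (isLRegular_single hl)
      (by rw [removeLEdge_single (by lia), hdrop _ (by lia)])
      (fun _ _ => by rw [Pi.single_eq_same]; lia) (by lia) (by lia)

end AddEdge
/-! ### The Mullineux map -/

section Mull

variable {l : ℕ} {p : ℕ → ℕ}

lemma mullAux_zero (l n : ℕ) : mullAux l n 0 = 0 := by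
  cases n with
  | zero => rfl
  | succ n => exact if_pos rfl

lemma mullAux_spec (hl : 2 ≤ l) (hp : IsPartition p) (hr : IsLRegular l p) {n : ℕ}
    (hn : pdeg p ≤ n) :
    IsPartition (mullAux l n p) ∧ IsLRegular l (mullAux l n p) ∧
      plen (mullAux l n p) = mullLen l p := by
  have hl0 : 0 < l := Nat.zero_lt_of_lt hl
  have hzero : IsPartition 0 ∧ IsLRegular l 0 ∧ plen 0 = mullLen l 0 :=
    ⟨isPartition_zero, fun _ h => absurd rfl h, by rw [plen_zero, mullLen_zero]⟩
  induction n generalizing p with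
  | zero =>
    have := hp.pdeg_removeLEdge_add_plen_le hl0
    obtain rfl := hp.eq_zero (hp.plen_le_iff.1 (by lia))
    exact hzero
  | succ n ih =>
    by_cases h0 : p 0 = 0
    · obtain rfl := hp.eq_zero h0
      rwa [mullAux_zero]
    · have := hp.pdeg_removeLEdge_add_plen_le hl0
      have := hp.lt_plen_iff.2 h0
      obtain ⟨hμ, hμr, hμlen⟩ := ih (isPartition_removeLEdge hp hl0)
        (isLRegular_removeLEdge hr hp hl) (by lia)
      have hbound := hp.mullLen_removeLEdge hl0
      rw [← hμlen] at hbound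
      rw [mullAux, if_neg h0]
      obtain ⟨hu, hur, -, hulen⟩ := Classical.epsilon_spec
        (exists_removeLEdge_eq hl hμ hμr hbound.1 hbound.2)
      exact ⟨hu, hur, hulen⟩

lemma plen_mull (hl : 2 ≤ l) (hp : IsPartition p) (hr : IsLRegular l p) :
    plen (mull l p) = mullLen l p :=
  (mullAux_spec hl hp hr le_rfl).2.2

end Mull

/-! ### Removing the first column -/

section RemoveFirstColumn

variable {l : ℕ} {p : ℕ → ℕ}

/-- The partition `λ̃` obtained from `λ` by removing the first column of its Young diagram; the
truncated subtraction leaves the zero parts unchanged. -/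
abbrev removeFirstColumn (p : ℕ → ℕ) : ℕ → ℕ := fun i => p i - 1

lemma isPartition_removeFirstColumn (hp : IsPartition p) : IsPartition (removeFirstColumn p) :=
  hp.of_le (fun _ _ h => Nat.sub_le_sub_right (hp.antitone h) 1) fun _ => Nat.sub_le _ _

lemma isLRegular_removeFirstColumn (hr : IsLRegular l p) : IsLRegular l (removeFirstColumn p) := by
  intro i hi
  have := hr i
  lia

lemma IsPartition.firstSeg_removeFirstColumn (hp : IsPartition p) (h : l < p 0 + plen p) :
    firstSeg l (removeFirstColumn p) = firstSeg l p := by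
  have hseg := hp.add_le_add_firstSeg l
  refine firstSeg_eq (firstSeg_pos l p) ?_ fun j hj hjh => ?_
  · have := hp.plen_le_iff (i := firstSeg l p)
    lia
  · have := sub_add_lt_of_lt_firstSeg hj hjh
    lia

-- Since `l ∣ e_l(λ)`, every `l`-segment has exactly `l` nodes, so that it ends in a row of `λ`.
lemma IsPartition.mullLen_removeFirstColumn (hp : IsPartition p) (hl : 0 < l)
    (hdvd : l ∣ elen l p) : mullLen l (removeFirstColumn p) = mullLen l p := by
  induction p, hp using IsPartition.segment_induction l with
  | zero => rfl
  | step p hp h0 ih =>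
    have hlong : l < p 0 + plen p := not_le.1 fun h => hp.not_dvd_elen hl h0 h hdvd
    have htail : l ∣ elen l (belowFirstSeg l p) := by
      rwa [hp.elen_of_lt hl hlong, Nat.dvd_add_right dvd_rfl] at hdvd
    have hseg := hp.firstSeg_removeFirstColumn hlong
    have hbelow : belowFirstSeg l (removeFirstColumn p) =
        removeFirstColumn (belowFirstSeg l p) := by
      rw [belowFirstSeg, hseg]
    have := (isPartition_removeFirstColumn hp).mullLen_add_firstSeg hl
    rw [hbelow, ih htail, hseg, ← hp.mullLen_add_firstSeg hl] at this
    exact Nat.add_right_cancel this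

end RemoveFirstColumn

theorem mull_plen_remove_first_column_general (l : ℕ) (hl : 2 ≤ l) (p : ℕ → ℕ)
    (hp : IsPartition p) (hreg : IsLRegular l p) (hdvd : l ∣ elen l p) :
    IsLRegular l (fun i => p i - 1) ∧
      plen (mull l p) = plen (mull l fun i => p i - 1) := by
  have hregCol := isLRegular_removeFirstColumn hreg
  refine ⟨hregCol, ?_⟩
  rw [plen_mull hl hp hreg, plen_mull hl (isPartition_removeFirstColumn hp) hregCol,
    hp.mullLen_removeFirstColumn (Nat.zero_lt_of_lt hl) hdvd]

/-- Let `λ` be a nonzero `l`-regular, edge `l`-connected partition with `l ∣ e_l(λ)`, and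
let `λ̃` be obtained by removing the first column of `λ`. Then `λ̃` is `l`-regular and
`ℓ(Mull(λ)) = ℓ(Mull(λ̃))`. -/
theorem mull_plen_remove_first_column (l : ℕ) (hl : 2 ≤ l) (p : ℕ → ℕ)
    (hp : IsPartition p) (hne : p 0 ≠ 0) (hreg : IsLRegular l p)
    (hconn : EdgeLConnected l p) (hdvd : l ∣ elen l p) :
    IsLRegular l (fun i => p i - 1) ∧
      plen (mull l p) = plen (mull l fun i => p i - 1) :=
  mull_plen_remove_first_column_general l hl p hp hreg hdvd

end
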